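/- Let Q be a q-matrix on F with the given block structure, n ≥ 1, and ₙQ its LC-block-augmented truncation. Let π, ₙπ : F → [0,∞) be probability vectors (each summing to 1) with ₙπ(k,i) = 0 whenever k > n. Let f : F → [1,∞) with Σ_{x} π(x) f(x) < ∞, v : F → [0,∞), and C ≥ 0. Assume: (a) for every x ∈ F, Σ_{y} |d(x;y)| f(y) < ∞, and for every g : F → ℝ with 0 ≤ g ≤ f pointwise and every x ∈ F, Σ_{y} |d(x;y)| g(y) ≤ (Σ_{z} π(z) g(z) + 1)(v(x) + C); (b) for every (k,i) ∈ F_n, Σ_{(m,j)∈F̄_n} q(k,i;m,j) v(m,j) < ∞; (c) the deviation identity holds: for every y ∈ F, ₙπ(y) − π(y) = Σ_{x∈F} Σ_{z∈F} ₙπ(x)(ₙq(x;z) − q(x;z)) d(z;y), all series converging absolutely. Then for every g : F → ℝ with 0 ≤ g ≤ f pointwise, Σ_{y} |π(y) − ₙπ(y)| g(y) ≤ ((Σ_{z} π(z) g(z) + 1)/2) · E(n), where E(n) := 2 Σ_{(k,i)∈F_n} ₙπ(k,i) Σ_{(m,j)∈F̄_n} q(k,i;m,j) (v(m,j) + v(n,j)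 + 2C). -/

import Mathlib

/-!
Write `Δ = ₙQ - Q`. For `x ∈ F_n`, the row `Δ(x; ·)` is obtained by moving each rate
`q(x; w)` with `w = (m, j)`, `m > n`, from `w` to its projection `(n, j)`; hence
`|Δ(x; z)| ≤ ∑_{w ∈ F̄_n} q(x; w) (1[z = w] + 1[z = (n, j)])` (`enorm_trunc_sub_le`).
Inserting this into the deviation identity, exchanging the nonnegative sums, and bounding
`∑_y |d(z; y)| g(y)` by hypothesis (a) gives the claim. The exchange of sums takes place
in `ℝ≥0∞`, where it is unconditional. The comparison with the real-valued `E(n)` at the end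
needs the inner series of `E(n)` to converge: this follows from hypothesis (b), the convergence
of the rows of `Q`, and the boundedness of `v` on the finite level `L_n`.
-/

/-- The block-structured state space `F = ⋃_{k≥0} L_k`, where
`L_0 = {0} × {0,…,S₀}` and `L_k = {k} × {0,…,S₁}` for `k ≥ 1`. -/
abbrev BState (S0 S1 : ℕ) : Type := {p : ℕ × ℕ // p.2 ≤ if p.1 = 0 then S0 else S1}

/-- A (stable) q-matrix. -/
def IsQMatrix {α : Type*} (q : α → α → ℝ) : Prop :=
  (∀ x y : α, x ≠ y → 0 ≤ q x y) ∧
    ∀ x : α, Summable (fun y : {z : α // z ≠ x} => q x (y : α)) ∧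
      (∑' y : {z : α // z ≠ x}, q x (y : α)) ≤ - q x x

/-- The last-column-block-augmented northwest-corner truncation `ₙQ` of `Q`. -/
noncomputable def LCtrunc (S0 S1 n : ℕ) (q : BState S0 S1 → BState S0 S1 → ℝ)
    (x y : BState S0 S1) : ℝ :=
  if y.1.1 < n then q x y
  else if y.1.1 = n then
    q x y + ∑' m : ℕ,
      if h : (n < m ∧ m ≠ x.1.1) ∧ y.1.2 ≤ (if m = 0 then S0 else S1)
        then q x ⟨(m, y.1.2), h.2⟩ else 0
  else if y.1.1 = x.1.1 then q x y else 0

/-- The value of `v` at state `(k, j)`, when `(k, j) ∈ F` (otherwise `0`). -/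
noncomputable def vAt (S0 S1 : ℕ) (v : BState S0 S1 → ℝ) (k j : ℕ) : ℝ :=
  if h : j ≤ (if k = 0 then S0 else S1) then v ⟨(k, j), h⟩ else 0

/-- The error decay function
`E(n) = 2 Σ_{(k,i)∈F_n} ₙπ(k,i) Σ_{(m,j)∈F̄_n} q(k,i;m,j) (v(m,j) + v(n,j) + 2C)`. -/
noncomputable def Efun (S0 S1 n : ℕ) (q : BState S0 S1 → BState S0 S1 → ℝ)
    (npi v : BState S0 S1 → ℝ) (C : ℝ) : ℝ :=
  2 * ∑' x : BState S0 S1,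
    (if x.1.1 ≤ n then
      npi x * ∑' y : BState S0 S1,
        (if n < y.1.1 then q x y * (v y + vAt S0 S1 v n y.1.2 + 2 * C) else 0)
     else 0)

open scoped ENNReal

/-- The projection `(m, j) ↦ (n, j)` of a state of level `m ≥ 1` onto the level `L_n`, `n ≥ 1`.
States of level `0` are left fixed, since `(n, j)` is only known to be a state when `j ≤ S₁`. -/
def lcProj (S0 S1 n : ℕ) (hn : 1 ≤ n) (w : BState S0 S1) : BState S0 S1 :=
  if h : w.1.1 = 0 then w
  else ⟨(n, w.1.2), by
    have := w.2
    rw [if_neg h] at this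
    rw [if_neg (by simp; omega)]
    exact this⟩

lemma lcProj_eq (S0 S1 n : ℕ) (hn : 1 ≤ n) (w : BState S0 S1) (hw : n < w.1.1) :
    (lcProj S0 S1 n hn w).1 = (n, w.1.2) := by
  unfold lcProj
  rw [dif_neg (by omega)]

lemma vAt_eq (S0 S1 n : ℕ) (hn : 1 ≤ n) (v : BState S0 S1 → ℝ) (w : BState S0 S1)
    (hw : n < w.1.1) : vAt S0 S1 v n w.1.2 = v (lcProj S0 S1 n hn w) := by
  have h := (lcProj S0 S1 n hn w).2
  have e := lcProj_eq S0 S1 n hn w hw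
  rw [e] at h
  unfold vAt
  rw [dif_pos h]
  congr 1
  exact Subtype.ext e.symm

/-- A rate `q(x; w)` leaving `F_n` contributes to `|ₙQ - Q|(x; ·)` only at `w` and at the
projection of `w` onto `L_n`. -/
lemma enorm_trunc_sub_le (S0 S1 n : ℕ) (hn : 1 ≤ n) (q : BState S0 S1 → BState S0 S1 → ℝ)
    (x z : BState S0 S1) (hx : x.1.1 ≤ n) :
    ‖LCtrunc S0 S1 n q x z - q x z‖ₑ ≤
      ∑' w : BState S0 S1, (if n < w.1.1 then ‖q x w‖ₑ else 0) *
        ((if z = w then 1 else 0) + (if z = lcProj S0 S1 n hn w then 1 else 0)) := by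
  unfold LCtrunc
  split_ifs with h1 h2 h3
  · simp
  · rw [add_sub_cancel_left]
    refine enorm_tsum_le_tsum_enorm.trans ?_
    -- The states above `(n, j)` are parametrised by their level `m`, injectively.
    have hz : z.1.2 ≤ S1 := by
      have := z.2
      rwa [if_neg (by omega)] at this
    let e : ℕ → BState S0 S1 := fun m =>
      ⟨(m + 1, z.1.2), by simpa using hz⟩
    have he : Function.Injective e := by
      intro a b hab
      simpa [e] using hab
    refine le_trans ?_ (ENNReal.tsum_comp_le_tsum_of_injective he _)
    rw [tsum_eq_zero_add' ENNReal.summable]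
    rw [dif_neg (by omega), enorm_zero, zero_add]
    refine ENNReal.tsum_le_tsum fun m => ?_
    by_cases h : (n < m + 1 ∧ m + 1 ≠ x.1.1) ∧ z.1.2 ≤ (if m + 1 = 0 then S0 else S1)
    · rw [dif_pos h]
      have hm : n < (e m).1.1 := h.1.1
      have hp : z = lcProj S0 S1 n hn (e m) := by
        apply Subtype.ext
        rw [lcProj_eq _ _ _ _ _ hm]
        exact Prod.ext h2 rfl
      rw [if_pos hm, if_pos hp, mul_add, mul_one]
      exact le_add_self
    · rw [dif_neg h, enorm_zero]
      exact zero_le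
  · omega
  · rw [zero_sub, enorm_neg]
    refine le_trans ?_ (ENNReal.le_tsum z)
    rw [if_pos (by omega), if_pos rfl, mul_add, mul_one]
    exact le_self_add

/-- Weighted form of `enorm_trunc_sub_le`, after exchanging the two sums. -/
lemma tsum_trunc_sub_mul_le (S0 S1 n : ℕ) (hn : 1 ≤ n) (q : BState S0 S1 → BState S0 S1 → ℝ)
    (x : BState S0 S1) (hx : x.1.1 ≤ n) (h : BState S0 S1 → ℝ≥0∞) :
    ∑' z, ‖LCtrunc S0 S1 n q x z - q x z‖ₑ * h z ≤
      ∑' w : BState S0 S1, (if n < w.1.1 then ‖q x w‖ₑ else 0) *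
        (h w + h (lcProj S0 S1 n hn w)) := by
  calc _ ≤ ∑' z, ∑' w : BState S0 S1, (if n < w.1.1 then ‖q x w‖ₑ else 0) *
        ((if z = w then h z else 0) + (if z = lcProj S0 S1 n hn w then h z else 0)) := by
        refine ENNReal.tsum_le_tsum fun z => ?_
        refine (mul_le_mul_left (enorm_trunc_sub_le S0 S1 n hn q x z hx) _).trans ?_
        rw [← ENNReal.tsum_mul_right]
        refine ENNReal.tsum_le_tsum fun w => le_of_eq ?_
        rw [mul_assoc, add_mul]
        congr 2 <;> rw [ite_mul, one_mul, zero_mul]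
    _ = _ := by
        rw [ENNReal.tsum_comm]
        refine tsum_congr fun w => ?_
        rw [ENNReal.tsum_mul_left, ENNReal.tsum_add, tsum_ite_eq, tsum_ite_eq]

lemma finite_levels_le (S0 S1 n : ℕ) : {x : BState S0 S1 | x.1.1 ≤ n}.Finite := by
  refine Set.Finite.of_finite_image (f := Subtype.val) ?_ Subtype.val_injective.injOn
  refine ((Set.finite_Iic n).prod (Set.finite_Iic (max S0 S1))).subset ?_
  rintro _ ⟨x, hx, rfl⟩
  refine ⟨hx, ?_⟩
  have := x.2
  simp only [Set.mem_Iic, le_max_iff]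
  split_ifs at this <;> omega

/-- The inner series of `E(n)` converges. -/
lemma summable_inner (S0 S1 n : ℕ) (hn : 1 ≤ n) (q : BState S0 S1 → BState S0 S1 → ℝ)
    (hq : IsQMatrix q) (v : BState S0 S1 → ℝ) (C : ℝ)
    (x : BState S0 S1) (hx : x.1.1 ≤ n)
    (hb : Summable (fun y : BState S0 S1 => if n < y.1.1 then q x y * v y else 0)) :
    Summable (fun y : BState S0 S1 =>
      if n < y.1.1 then q x y * (v y + vAt S0 S1 v n y.1.2 + 2 * C) else 0) := by
  have hpos : ∀ y : BState S0 S1, n < y.1.1 → 0 ≤ q x y := fun y hy =>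
    hq.1 x y (by rintro rfl; omega)
  obtain ⟨B, hB⟩ := ((finite_levels_le S0 S1 n).image (fun z => |v z|)).bddAbove
  have hrow : Summable (fun y => if n < y.1.1 then q x y else 0) := by
    have h1 := (summable_subtype_iff_indicator (s := {z | z ≠ x}) (f := q x)).1 (hq.2 x).1
    refine Summable.of_nonneg_of_le (fun y => ?_) (fun y => ?_) h1
    · split_ifs with h
      exacts [hpos y h, le_rfl]
    · split_ifs with h
      · rw [Set.indicator_of_mem]
        rintro rfl
        omega
      · exact Set.indicator_nonneg (fun z hz => hq.1 x z (Ne.symm hz)) y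
  have hmid : Summable (fun y => if n < y.1.1 then q x y * vAt S0 S1 v n y.1.2 else 0) := by
    refine Summable.of_norm_bounded (hrow.mul_right B) fun y => ?_
    split_ifs with h
    · rw [norm_mul, Real.norm_of_nonneg (hpos y h), vAt_eq S0 S1 n hn v y h]
      refine mul_le_mul_of_nonneg_left (hB ⟨_, ?_, rfl⟩) (hpos y h)
      simp [lcProj_eq S0 S1 n hn y h]
    · simp
  refine ((hb.add hmid).add (hrow.mul_right (2 * C))).congr fun y => ?_
  split_ifs
  · ring
  · simp

/-- Bound (2.18) of the paper's Theorem 2.1. -/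
theorem stmt3 (S0 S1 : ℕ) (n : ℕ) (hn : 1 ≤ n)
    (q d : BState S0 S1 → BState S0 S1 → ℝ) (hq : IsQMatrix q)
    (pi npi : BState S0 S1 → ℝ)
    (hpi0 : ∀ x, 0 ≤ pi x) (hpi1 : (∑' x, pi x) = 1)
    (hnpi0 : ∀ x, 0 ≤ npi x) (hnpi1 : (∑' x, npi x) = 1)
    (hvanish : ∀ x : BState S0 S1, n < x.1.1 → npi x = 0)
    (f : BState S0 S1 → ℝ) (hf : ∀ x, 1 ≤ f x)
    (hpif : Summable (fun x => pi x * f x))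
    (v : BState S0 S1 → ℝ) (hv : ∀ x, 0 ≤ v x)
    (C : ℝ) (hC : 0 ≤ C)
    (ha1 : ∀ x, Summable (fun y => |d x y| * f y))
    (ha2 : ∀ g : BState S0 S1 → ℝ, (∀ y, 0 ≤ g y ∧ g y ≤ f y) → ∀ x,
      (∑' y, |d x y| * g y) ≤ ((∑' z, pi z * g z) + 1) * (v x + C))
    (hb : ∀ x : BState S0 S1, x.1.1 ≤ n →
      Summable (fun y : BState S0 S1 => if n < y.1.1 then q x y * v y else 0))
    (hc : ∀ y : BState S0 S1,
      Summable (fun p : BState S0 S1 × BState S0 S1 =>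
        |npi p.1 * (LCtrunc S0 S1 n q p.1 p.2 - q p.1 p.2) * d p.2 y|) ∧
      npi y - pi y =
        ∑' x : BState S0 S1, ∑' z : BState S0 S1,
          npi x * (LCtrunc S0 S1 n q x z - q x z) * d z y)
    (g : BState S0 S1 → ℝ) (hg : ∀ y, 0 ≤ g y ∧ g y ≤ f y) :
    (∑' y, |pi y - npi y| * g y) ≤
      ((∑' z, pi z * g z) + 1) / 2 * Efun S0 S1 n q npi v C := by
  set K : ℝ := (∑' z, pi z * g z) + 1 with hK
  have hK0 : 0 ≤ K := add_nonneg (tsum_nonneg fun z => mul_nonneg (hpi0 z) (hg z).1) zero_le_one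
  have hpos : ∀ x y : BState S0 S1, x.1.1 ≤ n → n < y.1.1 → 0 ≤ q x y := fun x y hx hy =>
    hq.1 x y (by rintro rfl; omega)
  have hvA : ∀ y : BState S0 S1, n < y.1.1 → 0 ≤ vAt S0 S1 v n y.1.2 := fun y hy => by
    rw [vAt_eq S0 S1 n hn v y hy]; exact hv _
  -- The real series in `E(n)`: inner terms `I x y`, outer terms `A x`.
  set I : BState S0 S1 → BState S0 S1 → ℝ := fun x y =>
    if n < y.1.1 then q x y * (v y + vAt S0 S1 v n y.1.2 + 2 * C) else 0 with hI
  have hI0 : ∀ x y, x.1.1 ≤ n → 0 ≤ I x y := by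
    intro x y hx
    simp only [hI]
    split_ifs with h
    · exact mul_nonneg (hpos x y hx h) (by linarith [hv y, hvA y h])
    · exact le_rfl
  set A : BState S0 S1 → ℝ := fun x => if x.1.1 ≤ n then npi x * ∑' y, I x y else 0 with hA
  have hA0 : ∀ x, 0 ≤ A x := by
    intro x
    simp only [hA]
    split_ifs with h
    · exact mul_nonneg (hnpi0 x) (tsum_nonneg fun y => hI0 x y h)
    · exact le_rfl
  have hAs : Summable A := by
    refine summable_of_hasFiniteSupport ((finite_levels_le S0 S1 n).subset fun x hx => ?_)
    by_contra h
    exact hx (if_neg h)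
  have hE : K / 2 * Efun S0 S1 n q npi v C = K * ∑' x, A x := by
    change K / 2 * (2 * ∑' x, A x) = _
    ring
  -- Hypothesis (a), transferred to `ℝ≥0∞`.
  have hd : ∀ z, ∑' y, ‖d z y‖ₑ * ‖g y‖ₑ ≤ ENNReal.ofReal (K * (v z + C)) := by
    intro z
    have hs : Summable (fun y => |d z y| * g y) :=
      Summable.of_nonneg_of_le (fun y => mul_nonneg (abs_nonneg _) (hg y).1)
        (fun y => mul_le_mul_of_nonneg_left (hg y).2 (abs_nonneg _)) (ha1 z)
    refine le_trans (le_of_eq ?_) (ENNReal.ofReal_le_ofReal (ha2 g hg z))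
    rw [ENNReal.ofReal_tsum_of_nonneg (fun y => mul_nonneg (abs_nonneg _) (hg y).1) hs]
    refine tsum_congr fun y => ?_
    rw [ENNReal.ofReal_mul (abs_nonneg _), Real.enorm_eq_ofReal_abs,
      Real.enorm_eq_ofReal (hg y).1]
  have key : ∑' y, ENNReal.ofReal (|pi y - npi y| * g y) ≤
      ENNReal.ofReal (K * ∑' x, A x) := by
    calc _ ≤ ∑' y, ∑' x, ∑' z, ‖npi x‖ₑ * (‖LCtrunc S0 S1 n q x z - q x z‖ₑ *
          (‖d z y‖ₑ * ‖g y‖ₑ)) := by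
          refine ENNReal.tsum_le_tsum fun y => ?_
          rw [ENNReal.ofReal_mul (abs_nonneg _), abs_sub_comm, ← Real.enorm_eq_ofReal_abs,
            ← Real.enorm_eq_ofReal (hg y).1, (hc y).2]
          refine (mul_le_mul_left enorm_tsum_le_tsum_enorm _).trans ?_
          rw [← ENNReal.tsum_mul_right]
          refine ENNReal.tsum_le_tsum fun x => ?_
          refine (mul_le_mul_left enorm_tsum_le_tsum_enorm _).trans ?_
          rw [← ENNReal.tsum_mul_right]
          refine ENNReal.tsum_le_tsum fun z => le_of_eq ?_
          rw [enorm_mul, enorm_mul]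
          ring
      _ = ∑' x, ‖npi x‖ₑ * ∑' z, ‖LCtrunc S0 S1 n q x z - q x z‖ₑ *
          ∑' y, ‖d z y‖ₑ * ‖g y‖ₑ := by
          rw [ENNReal.tsum_comm]
          refine tsum_congr fun x => ?_
          rw [ENNReal.tsum_comm, ← ENNReal.tsum_mul_left]
          refine tsum_congr fun z => ?_
          rw [ENNReal.tsum_mul_left, ENNReal.tsum_mul_left]
      _ ≤ ∑' x, ENNReal.ofReal (K * A x) := by
          refine ENNReal.tsum_le_tsum fun x => ?_
          by_cases hx : x.1.1 ≤ n
          · have hAx : K * A x = npi x * (∑' y, K * I x y) := by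
              simp only [hA, if_pos hx, tsum_mul_left]
              ring
            rw [hAx, ENNReal.ofReal_mul (hnpi0 x), Real.enorm_eq_ofReal (hnpi0 x),
              ENNReal.ofReal_tsum_of_nonneg (fun y => mul_nonneg hK0 (hI0 x y hx))
                ((summable_inner S0 S1 n hn q hq v C x hx (hb x hx)).mul_left K)]
            refine mul_le_mul_right ?_ _
            refine (ENNReal.tsum_le_tsum fun z => mul_le_mul_right (hd z) _).trans ?_
            refine (tsum_trunc_sub_mul_le S0 S1 n hn q x hx _).trans ?_
            refine ENNReal.tsum_le_tsum fun w => ?_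
            simp only [hI]
            split_ifs with hw
            · rw [Real.enorm_eq_ofReal (hpos x w hx hw),
                ← ENNReal.ofReal_add (mul_nonneg hK0 (add_nonneg (hv _) hC))
                  (mul_nonneg hK0 (add_nonneg (hv _) hC)),
                ← ENNReal.ofReal_mul (hpos x w hx hw), vAt_eq S0 S1 n hn v w hw]
              refine le_of_eq (congrArg _ ?_)
              ring
            · simp
          · rw [hvanish x (by omega)]
            simp
      _ = _ := by
          rw [← tsum_mul_left, ENNReal.ofReal_tsum_of_nonneg
            (fun x => mul_nonneg hK0 (hA0 x)) (hAs.mul_left K)]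
  rw [hE]
  have h0 : 0 ≤ K * ∑' x, A x := mul_nonneg hK0 (tsum_nonneg hA0)
  -- `ENNReal.tsum_toReal_eq` needs no summability of the left-hand series.
  have h1 := ENNReal.toReal_mono ENNReal.ofReal_ne_top key
  rw [ENNReal.toReal_ofReal h0, ENNReal.tsum_toReal_eq (fun _ => ENNReal.ofReal_ne_top)] at h1
  refine le_trans (le_of_eq (tsum_congr fun y => ?_)) h1
  rw [ENNReal.toReal_ofReal (mul_nonneg (abs_nonneg _) (hg y).1)]
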